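/- Let m ≥ 2 and n ≥ 1, and let A1, A2 be m-order n-dimensional real tensors that are both Z-tensors and such that the pair Ã = {A1, A2} is of type semi-positive. Then for any q1, q2 ∈ ℝⁿ with q1 < 0 and q2 < 0, the vertical tensor complementarity problem VTCP(Ã, q̃) has exactly one solution x with x > 0. -/

import Mathlib

open Finset

/-- For an `m`-order `n`-dimensional real tensor `A` (the first index separated, the
remaining `m-1` indices given as a function `Fin (m-1) → Fin n`),
`tProd A x i = (A x^{m-1})_i = ∑_{i2,…,im} a_{i i2 ⋯ im} x_{i2} ⋯ x_{im}`. -/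
noncomputable def tProd {n k : ℕ} (A : Fin n → (Fin k → Fin n) → ℝ)
    (x : Fin n → ℝ) : Fin n → ℝ :=
  fun i => ∑ f : Fin k → Fin n, A i f * ∏ j, x (f j)

/-- `A` is a Z-tensor: all off-diagonal entries (entries whose indices are not all
equal) are non-positive. -/
def IsZTensor {n k : ℕ} (A : Fin n → (Fin k → Fin n) → ℝ) : Prop :=
  ∀ (i : Fin n) (f : Fin k → Fin n), ¬ (∀ j, f j = i) → A i f ≤ 0

/-- `x` solves the vertical tensor complementarity problem VTCP({A1,A2},{q1,q2}):
`q1 + A1 x^{m-1} ≥ 0`, `q2 + A2 x^{m-1} ≥ 0`, and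
`(q1 + A1 x^{m-1})ᵀ (q2 + A2 x^{m-1}) = 0`. -/
def VTCPSol {n k : ℕ} (A1 A2 : Fin n → (Fin k → Fin n) → ℝ)
    (q1 q2 x : Fin n → ℝ) : Prop :=
  (∀ i, 0 ≤ q1 i + tProd A1 x i) ∧ (∀ i, 0 ≤ q2 i + tProd A2 x i) ∧
    ∑ i, (q1 i + tProd A1 x i) * (q2 i + tProd A2 x i) = 0

/-!
The VTCP says that the residual `F x = min (q₁ + A₁ x^{m-1}) (q₂ + A₂ x^{m-1})` vanishes. For
Z-tensors, `F x i` does not increase on the nonnegative orthant when the coordinates of `x` other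
than `x i` increase.

Existence: semi-positivity yields `w ≥ 0` with `F w ≥ 0`. Minimise `∑ i, x i` over the compact set
of `x ∈ [0, w]` with `F x ≥ 0`. At the minimiser, `F x i > 0` is impossible at a coordinate with
`x i > 0`, since `x i` could be decreased a little without destroying feasibility; and `x i = 0`
would give `F x i ≤ F 0 i < 0`.

Uniqueness: let `x > 0` and `y > 0` be zeros of `F`, and let `t = y i / x i` be the largest ratio of
their coordinates. If `t > 1`, then `y ≤ t x` with equality at `i`, so `0 = F y i ≥ F (t x) i`;
but `F x = 0` and `q < 0` make both `(A₁ x^{m-1})_i` and `(A₂ x^{m-1})_i` positive, so the factor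
`t^{m-1} > 1` gives `F (t x) i > 0`. Hence `y ≤ x`, and by symmetry `x = y`.
-/

open Filter Topology

/-- Off-diagonally antitone maps on a set `s` (also called Z-functions, the nonlinear analogue of
Z-matrices): a component `F x i` does not increase when `x` increases inside `s` with its own
coordinate `x i` fixed. -/
def OffDiagAntitoneOn {ι : Type*} (F : (ι → ℝ) → ι → ℝ) (s : Set (ι → ℝ)) : Prop :=
  ∀ ⦃y⦄, y ∈ s → ∀ ⦃x⦄, x ∈ s → y ≤ x → ∀ i, y i = x i → F x i ≤ F y i

namespace OffDiagAntitoneOn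

variable {ι : Type*} {F G : (ι → ℝ) → ι → ℝ} {s t : Set (ι → ℝ)} {a b x y : ι → ℝ} {i : ι}

lemma mono (hF : OffDiagAntitoneOn F t) (hst : s ⊆ t) : OffDiagAntitoneOn F s :=
  fun _ hy _ hx => hF (hst hy) (hst hx)

lemma const_add (hF : OffDiagAntitoneOn F s) (q : ι → ℝ) :
    OffDiagAntitoneOn (fun x => q + F x) s :=
  fun _ hy _ hx hyx i hi => add_le_add_right (hF hy hx hyx i hi) (q i)

lemma inf (hF : OffDiagAntitoneOn F s) (hG : OffDiagAntitoneOn G s) :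
    OffDiagAntitoneOn (fun x => F x ⊓ G x) s :=
  fun _ hy _ hx hyx i hi => inf_le_inf (hF hy hx hyx i hi) (hG hy hx hyx i hi)

lemma pos_of_nonneg (hF : OffDiagAntitoneOn F (Set.Ici 0)) (hF0 : F 0 i < 0) (hx : 0 ≤ x)
    (hFx : 0 ≤ F x i) : 0 < x i := by
  refine (hx i).lt_of_ne fun hxi => ?_
  have : F x i ≤ F 0 i := hF Set.self_mem_Ici hx hx i hxi
  linarith

lemma exists_lt_of_pos (hF : OffDiagAntitoneOn F (Set.Icc a b))
    (hcont : ContinuousOn F (Set.Icc a b)) (hx : x ∈ Set.Icc a b) (hFx : 0 ≤ F x)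
    (hai : a i < x i) (hi : 0 < F x i) : ∃ y ∈ Set.Icc a b, 0 ≤ F y ∧ y < x := by
  classical
  have hle : ∀ r < x i, Function.update x i r ≤ x := fun r hr => update_le_self_iff.2 hr.le
  have hmem : ∀ᶠ r in 𝓝[<] x i, Function.update x i r ∈ Set.Icc a b := by
    filter_upwards [Ioo_mem_nhdsLT hai] with r hr
    exact ⟨le_update_iff.2 ⟨hr.1.le, fun j _ => hx.1 j⟩, (hle r hr.2).trans hx.2⟩
  have hlim : Tendsto (Function.update x i) (𝓝[<] x i) (𝓝[Set.Icc a b] x) := by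
    refine tendsto_nhdsWithin_iff.2 ⟨?_, hmem⟩
    have hupd : Continuous (Function.update x i) := by fun_prop
    simpa using hupd.continuousWithinAt.tendsto (x := x i) (s := Set.Iio (x i))
  have hpos : ∀ᶠ r in 𝓝[<] x i, 0 < F (Function.update x i r) i :=
    (((hcont x hx).tendsto.comp hlim).apply_nhds i).eventually_const_lt hi
  obtain ⟨r, hrmem, hrpos, hr⟩ := (hmem.and (hpos.and self_mem_nhdsWithin)).exists
  refine ⟨_, hrmem, fun j => ?_, update_lt_self_iff.2 hr⟩
  obtain rfl | hj := eq_or_ne j i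
  · exact hrpos.le
  · exact (hFx j).trans (hF hrmem hx (hle r hr) j (Function.update_of_ne hj r x))

lemma exists_mem_Icc_nonneg_and_eq_zero [Finite ι] (hF : OffDiagAntitoneOn F (Set.Icc a b))
    (hcont : ContinuousOn F (Set.Icc a b)) (hab : a ≤ b) (hFb : 0 ≤ F b) :
    ∃ x ∈ Set.Icc a b, 0 ≤ F x ∧ ∀ i, a i < x i → F x i = 0 := by
  cases nonempty_fintype ι
  have hcompact : IsCompact (Set.Icc a b ∩ F ⁻¹' Set.Ici 0) :=
    isCompact_Icc.of_isClosed_subset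
      (hcont.preimage_isClosed_of_isClosed isClosed_Icc isClosed_Ici) Set.inter_subset_left
  obtain ⟨x, ⟨hx, hFx⟩, hmin⟩ := hcompact.exists_isMinOn ⟨b, ⟨hab, le_rfl⟩, hFb⟩
    (f := fun x => ∑ i, x i) (by fun_prop)
  refine ⟨x, hx, hFx, fun i hai => ?_⟩
  by_contra hne
  obtain ⟨y, hy, hFy, hyx⟩ := hF.exists_lt_of_pos hcont hx hFx hai ((hFx i).lt_of_ne' hne)
  exact (Fintype.sum_strictMono hyx).not_ge (hmin ⟨hy, hFy⟩)

lemma le_of_nonpos_of_smul_pos [Finite ι] (hF : OffDiagAntitoneOn F (Set.Ici 0)) (hy : 0 ≤ y)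
    (hFy : F y ≤ 0) (hx : ∀ i, 0 < x i) (hFx : ∀ t : ℝ, 1 < t → ∀ i, 0 < F (t • x) i) :
    y ≤ x := by
  by_contra hyx
  obtain ⟨j, hj⟩ : ∃ j, x j < y j := by simpa [Pi.le_def] using hyx
  have : Nonempty ι := ⟨j⟩
  obtain ⟨i, hmax⟩ := Finite.exists_max fun l => y l / x l
  set t := y i / x i
  have ht : 1 < t := ((one_lt_div (hx j)).2 hj).trans_le (hmax j)
  have hle : y ≤ t • x := fun l => (div_le_iff₀ (hx l)).1 (hmax l)
  have heq : y i = (t • x) i := (div_mul_cancel₀ (y i) (hx i).ne').symm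
  exact (((hFx t ht i).trans_le (hF hy (hy.trans hle) hle i heq)).trans_le (hFy i)).false

end OffDiagAntitoneOn

section Tensor

variable {n k : ℕ} (A : Fin n → (Fin k → Fin n) → ℝ)

lemma tProd_smul (t : ℝ) (x : Fin n → ℝ) : tProd A (t • x) = t ^ k • tProd A x := by
  ext i
  simp only [tProd, Pi.smul_apply, smul_eq_mul, prod_mul_distrib, prod_const, card_univ,
    Fintype.card_fin, mul_sum, mul_left_comm]

lemma tProd_zero (hk : k ≠ 0) : tProd A 0 = 0 := by
  simpa [hk] using tProd_smul A 0 0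

lemma continuous_tProd : Continuous (tProd A) := by
  unfold tProd
  fun_prop

lemma eventually_nonneg_add_tProd_smul (hk : k ≠ 0) (q : Fin n → ℝ) {u : Fin n → ℝ}
    (hu : ∀ i, 0 < tProd A u i) : ∀ᶠ t : ℝ in atTop, 0 ≤ q + tProd A (t • u) := by
  refine eventually_all.2 fun i => ?_
  have hlim : Tendsto (fun t : ℝ => t ^ k * tProd A u i) atTop atTop :=
    (tendsto_pow_atTop hk).atTop_mul_const (hu i)
  simpa only [tProd_smul] using! (tendsto_atTop_add_const_left _ (q i) hlim).eventually_ge_atTop 0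

variable {A}

lemma IsZTensor.offDiagAntitoneOn_tProd (hA : IsZTensor A) :
    OffDiagAntitoneOn (tProd A) (Set.Ici 0) := by
  intro y hy x _ hyx i hi
  refine sum_le_sum fun f _ => ?_
  by_cases hf : ∀ j, f j = i
  · simp only [hf, hi, le_refl]
  · exact mul_le_mul_of_nonpos_left (prod_le_prod (fun j _ => hy (f j)) fun j _ => hyx (f j))
      (hA i f hf)

lemma add_tProd_smul_pos (hk : k ≠ 0) {q x : Fin n → ℝ} {i : Fin n} (hq : q i < 0)
    (hx : 0 ≤ q i + tProd A x i) {t : ℝ} (ht : 1 < t) : 0 < q i + tProd A (t • x) i := by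
  have hpos : 0 < tProd A x i := by linarith
  have hlt : tProd A x i < t ^ k * tProd A x i :=
    lt_mul_of_one_lt_left hpos (one_lt_pow₀ ht hk)
  rw [tProd_smul, Pi.smul_apply, smul_eq_mul]
  linarith

end Tensor

section Residual

variable {n k : ℕ} (A1 A2 : Fin n → (Fin k → Fin n) → ℝ) (q1 q2 : Fin n → ℝ)

/-- The natural residual of VTCP({A1,A2},{q1,q2}), the componentwise minimum of the two affine
expressions; its zeros are the solutions of the problem. -/
noncomputable def vtcpResidual (x : Fin n → ℝ) : Fin n → ℝ :=
  (q1 + tProd A1 x) ⊓ (q2 + tProd A2 x)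

lemma continuous_vtcpResidual : Continuous (vtcpResidual A1 A2 q1 q2) :=
  continuous_pi fun i =>
    (continuous_const.add ((continuous_apply i).comp (continuous_tProd A1))).inf
      (continuous_const.add ((continuous_apply i).comp (continuous_tProd A2)))

variable {A1 A2 q1 q2} {x : Fin n → ℝ}

lemma vtcpSol_iff_vtcpResidual_eq_zero :
    VTCPSol A1 A2 q1 q2 x ↔ vtcpResidual A1 A2 q1 q2 x = 0 := by
  constructor
  · rintro ⟨h1, h2, hsum⟩
    ext i
    have hmul := (sum_eq_zero_iff_of_nonneg fun j _ => mul_nonneg (h1 j) (h2 j)).1 hsum i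
      (mem_univ i)
    rcases mul_eq_zero.1 hmul with h | h
    · exact (inf_eq_left.2 (h.trans_le (h2 i))).trans h
    · exact (inf_eq_right.2 (h.trans_le (h1 i))).trans h
  · intro h
    have hnonneg := le_inf_iff.1 h.ge
    refine ⟨hnonneg.1, hnonneg.2, sum_eq_zero fun i _ => mul_eq_zero.2 ?_⟩
    exact (min_eq_iff.1 (congrFun h i)).imp And.left And.left

lemma offDiagAntitoneOn_vtcpResidual (hA1 : IsZTensor A1) (hA2 : IsZTensor A2) :
    OffDiagAntitoneOn (vtcpResidual A1 A2 q1 q2) (Set.Ici 0) :=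
  (hA1.offDiagAntitoneOn_tProd.const_add q1).inf (hA2.offDiagAntitoneOn_tProd.const_add q2)

lemma vtcpResidual_zero (hk : k ≠ 0) : vtcpResidual A1 A2 q1 q2 0 = q1 ⊓ q2 := by
  simp only [vtcpResidual, tProd_zero _ hk, add_zero]

lemma vtcpResidual_smul_pos (hk : k ≠ 0) {i : Fin n} (hq1 : q1 i < 0) (hq2 : q2 i < 0)
    (hx : 0 ≤ vtcpResidual A1 A2 q1 q2 x i) {t : ℝ} (ht : 1 < t) :
    0 < vtcpResidual A1 A2 q1 q2 (t • x) i :=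
  lt_inf_iff.2 ⟨add_tProd_smul_pos hk hq1 (le_inf_iff.1 hx).1 ht,
    add_tProd_smul_pos hk hq2 (le_inf_iff.1 hx).2 ht⟩

lemma exists_nonneg_vtcpResidual_nonneg (hk : k ≠ 0) {u : Fin n → ℝ} (hu : 0 ≤ u)
    (hu1 : ∀ i, 0 < tProd A1 u i) (hu2 : ∀ i, 0 < tProd A2 u i) :
    ∃ w, 0 ≤ w ∧ 0 ≤ vtcpResidual A1 A2 q1 q2 w := by
  obtain ⟨t, ht, ht1, ht2⟩ := ((eventually_ge_atTop 0).and
    ((eventually_nonneg_add_tProd_smul A1 hk q1 hu1).and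
      (eventually_nonneg_add_tProd_smul A2 hk q2 hu2))).exists
  exact ⟨t • u, smul_nonneg ht hu, le_inf ht1 ht2⟩

lemma exists_pos_vtcpResidual_eq_zero (hk : k ≠ 0) (hA1 : IsZTensor A1) (hA2 : IsZTensor A2)
    (hq : ∀ i, (q1 ⊓ q2) i < 0) {w : Fin n → ℝ} (hw : 0 ≤ w)
    (hFw : 0 ≤ vtcpResidual A1 A2 q1 q2 w) :
    ∃ x : Fin n → ℝ, (∀ i, 0 < x i) ∧ vtcpResidual A1 A2 q1 q2 x = 0 := by
  have hF := offDiagAntitoneOn_vtcpResidual (q1 := q1) (q2 := q2) hA1 hA2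
  obtain ⟨x, hx, hFx, hzero⟩ := (hF.mono Set.Icc_subset_Ici_self).exists_mem_Icc_nonneg_and_eq_zero
    (continuous_vtcpResidual A1 A2 q1 q2).continuousOn hw hFw
  have hpos : ∀ i, 0 < x i := fun i =>
    hF.pos_of_nonneg (by rw [vtcpResidual_zero hk]; exact hq i) hx.1 (hFx i)
  exact ⟨x, hpos, funext fun i => hzero i (hpos i)⟩

lemma le_of_vtcpResidual_nonpos_of_nonneg (hk : k ≠ 0) (hA1 : IsZTensor A1) (hA2 : IsZTensor A2)
    (hq1 : ∀ i, q1 i < 0) (hq2 : ∀ i, q2 i < 0) {y : Fin n → ℝ} (hy : 0 ≤ y)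
    (hFy : vtcpResidual A1 A2 q1 q2 y ≤ 0) (hx : ∀ i, 0 < x i)
    (hFx : 0 ≤ vtcpResidual A1 A2 q1 q2 x) : y ≤ x :=
  (offDiagAntitoneOn_vtcpResidual hA1 hA2).le_of_nonpos_of_smul_pos hy hFy hx
    fun _ ht i => vtcpResidual_smul_pos hk (hq1 i) (hq2 i) (hFx i) ht

end Residual

/-- If `A1, A2` are Z-tensors and `{A1, A2}` is of type semi-positive, then for any
`q1 < 0`, `q2 < 0` the VTCP has exactly one positive solution. -/
theorem stmt_18 {m n : ℕ} (hm : 2 ≤ m) (hn : 1 ≤ n)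
    (A1 A2 : Fin n → (Fin (m - 1) → Fin n) → ℝ)
    (hZ1 : IsZTensor A1) (hZ2 : IsZTensor A2)
    (hsp : ∃ x : Fin n → ℝ, (∀ i, 0 < x i) ∧
      (∀ i, 0 < tProd A1 x i) ∧ (∀ i, 0 < tProd A2 x i))
    (q1 q2 : Fin n → ℝ) (hq1 : ∀ i, q1 i < 0) (hq2 : ∀ i, q2 i < 0) :
    ∃! x : Fin n → ℝ, (∀ i, 0 < x i) ∧ VTCPSol A1 A2 q1 q2 x := by
  have hk : m - 1 ≠ 0 := by omega
  simp only [vtcpSol_iff_vtcpResidual_eq_zero]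
  obtain ⟨u, hu, hu1, hu2⟩ := hsp
  obtain ⟨w, hw, hFw⟩ := exists_nonneg_vtcpResidual_nonneg (q1 := q1) (q2 := q2) hk
    (fun i => (hu i).le) hu1 hu2
  obtain ⟨x, hx, hFx⟩ := exists_pos_vtcpResidual_eq_zero hk hZ1 hZ2
    (fun i => inf_lt_of_left_lt (hq1 i)) hw hFw
  refine ⟨x, ⟨hx, hFx⟩, fun y ⟨hy, hFy⟩ => le_antisymm ?_ ?_⟩
  · exact le_of_vtcpResidual_nonpos_of_nonneg hk hZ1 hZ2 hq1 hq2
      (fun i => (hy i).le) hFy.le hx hFx.ge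
  · exact le_of_vtcpResidual_nonpos_of_nonneg hk hZ1 hZ2 hq1 hq2
      (fun i => (hx i).le) hFx.le hy hFy.ge
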